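/- Let R be a finite associative ring with zp(R) = ε > 0, let X = {x ∈ R : |xR| ≤ 2/ε}, and let B be the additive subgroup of R generated by X. Then every element of B is a sum of at most 6/ε elements of X, and consequently |bR| ≤ (2/ε)^{6/ε} for every b ∈ B. -/

import Mathlib

/-!
Left multiplication by `x` is additive with image `xR`, so the annihilator of `x` has `|R| / |xR|`
elements and `zp(R) = ε` says that `1 / |xR|` has average `ε` over `x ∈ R`. The elements outside
`X` contribute at most `ε / 2` to this average, hence `|X| ≥ (ε / 2) |R|` (`card_lower_bound`).

A large symmetric set generates quickly (`length_bound`): let `b` be a sum `x₁ + ⋯ + xₖ` of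
elements of `X` with `k` minimal, and let `s₀, s₃, s₆, …` be every third partial sum. The translates
`sⱼ + X` are pairwise disjoint, since an equation `sᵢ + x = sⱼ + x'` would allow the at least three
summands between `sᵢ` and `sⱼ` to be replaced by the two summands `x` and `-x'`. Counting gives
`(k / 3) |X| ≤ |R|`, so `k ≤ 6 / ε`.

The bound on `|bR|` follows from `(x + y)R ⊆ xR + yR` and `2 / ε ≥ 1`.
-/

/-- The zero-probability of a finite (not necessarily unital) ring:
the probability that the product of two random elements is zero. -/
noncomputable def ringZeroProb (R : Type) [NonUnitalRing R] [Fintype R] : ℝ :=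
  (Nat.card {p : R × R // p.1 * p.2 = 0} : ℝ) / (Nat.card R : ℝ) ^ 2

/-- The right multiples `xR` of `x`. -/
def rightMul {R : Type} [NonUnitalRing R] (x : R) : Set R := {z : R | ∃ r : R, z = x * r}

theorem rightMul_eq_range {R : Type} [NonUnitalRing R] (x : R) :
    rightMul x = ((AddMonoidHom.mulLeft x).range : Set R) := by
  ext z
  simp [rightMul, eq_comm]

theorem card_ker_mul_card {R : Type} [NonUnitalRing R] (x : R) :
    Nat.card {y : R // x * y = 0} * Nat.card (rightMul x) = Nat.card R := by
  have h := (AddMonoidHom.mulLeft x).ker.card_mul_index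
  rw [AddSubgroup.index_ker] at h
  rw [rightMul_eq_range]
  exact h

theorem rightMul_neg {R : Type} [NonUnitalRing R] (x : R) : rightMul (-x) = rightMul x := by
  ext z
  constructor
  · rintro ⟨r, rfl⟩
    exact ⟨-r, by simp⟩
  · rintro ⟨r, rfl⟩
    exact ⟨-r, by simp⟩

theorem card_rightMul_zero {R : Type} [NonUnitalRing R] :
    Nat.card (rightMul (0 : R)) = 1 := by
  have : rightMul (0 : R) = {0} := by
    ext z
    simp [rightMul]
  rw [this]
  simp

open scoped Pointwise in
theorem card_rightMul_add_le {R : Type} [NonUnitalRing R] [Fintype R] (x y : R) :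
    Nat.card (rightMul (x + y)) ≤ Nat.card (rightMul x) * Nat.card (rightMul y) := by
  refine le_trans ?_ (Set.natCard_add_le (s := rightMul x) (t := rightMul y))
  refine Nat.card_mono (Set.toFinite _) ?_
  rintro z ⟨r, rfl⟩
  exact ⟨x * r, ⟨r, rfl⟩, y * r, ⟨r, rfl⟩, (add_mul x y r).symm⟩

theorem card_rightMul_sum_le {R : Type} [NonUnitalRing R] [Fintype R] (C : ℝ) (hC : 0 ≤ C)
    (l : List R) (hl : ∀ x ∈ l, (Nat.card (rightMul x) : ℝ) ≤ C) :
    (Nat.card (rightMul l.sum) : ℝ) ≤ C ^ l.length := by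
  induction l with
  | nil => rw [List.sum_nil, card_rightMul_zero, List.length_nil, pow_zero, Nat.cast_one]
  | cons a l ih =>
    have h1 := hl a (by simp)
    have h2 := ih fun x hx => hl x (by simp [hx])
    have h3 : (Nat.card (rightMul (a + l.sum)) : ℝ) ≤
        Nat.card (rightMul a) * Nat.card (rightMul l.sum) := by
      exact_mod_cast card_rightMul_add_le a l.sum
    rw [List.sum_cons, List.length_cons, pow_succ']
    exact h3.trans (mul_le_mul h1 h2 (by positivity) hC)

theorem card_zero_pairs {R : Type} [NonUnitalRing R] [Fintype R] :
    Nat.card {p : R × R // p.1 * p.2 = 0} = ∑ x : R, Nat.card {y : R // x * y = 0} := by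
  rw [← Nat.card_sigma]
  exact Nat.card_congr
    { toFun := fun p => ⟨p.1.1, p.1.2, p.2⟩
      invFun := fun q => ⟨(q.1, q.2.1), q.2.2⟩
      left_inv := fun _ => rfl
      right_inv := fun _ => rfl }

theorem ringZeroProb_le_one {R : Type} [NonUnitalRing R] [Fintype R] : ringZeroProb R ≤ 1 := by
  unfold ringZeroProb
  refine div_le_one_of_le₀ ?_ (by positivity)
  have h := Nat.card_le_card_of_injective
    (fun p : {p : R × R // p.1 * p.2 = 0} => p.1) Subtype.val_injective
  rw [Nat.card_prod, ← sq] at h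
  exact_mod_cast h

theorem card_lower_bound {R : Type} [NonUnitalRing R] [Fintype R] (ε : ℝ) (hε : 0 < ε)
    (hzp : ringZeroProb R = ε) :
    ε / 2 * Nat.card R ≤ Nat.card {x : R | (Nat.card (rightMul x) : ℝ) ≤ 2 / ε} := by
  classical
  have hN : (0 : ℝ) < Nat.card R := by exact_mod_cast Nat.card_pos
  set N : ℝ := (Nat.card R : ℝ) with hNdef
  -- Members of `X` have at most `N` annihilators, all others at most `(ε / 2) N`.
  have key : ∀ x : R, (Nat.card {y : R // x * y = 0} : ℝ) ≤
      (if (Nat.card (rightMul x) : ℝ) ≤ 2 / ε then N else 0) + ε / 2 * N := by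
    intro x
    have h : (Nat.card {y : R // x * y = 0} : ℝ) * Nat.card (rightMul x) = N := by
      rw [hNdef]
      exact_mod_cast card_ker_mul_card x
    split_ifs with hx
    · have : (Nat.card {y : R // x * y = 0} : ℝ) ≤ N := by
        rw [hNdef]
        exact_mod_cast Nat.card_le_card_of_injective
          (fun y : {y : R // x * y = 0} => y.1) Subtype.val_injective
      have : 0 < ε / 2 * N := by positivity
      linarith
    · push Not at hx
      rw [← h, zero_add]
      have h1 : 1 ≤ ε / 2 * Nat.card (rightMul x) := by
        rw [div_lt_iff₀ hε] at hx
        linarith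
      nlinarith [(Nat.cast_nonneg _ : (0 : ℝ) ≤ Nat.card {y : R // x * y = 0})]
  have hsum := Finset.sum_le_sum fun x (_ : x ∈ Finset.univ) => key x
  rw [Finset.sum_add_distrib, ← Finset.sum_filter, Finset.sum_const, Finset.sum_const,
    ← Nat.cast_sum, ← card_zero_pairs, Finset.card_univ, ← Nat.card_eq_fintype_card,
    nsmul_eq_mul, nsmul_eq_mul, ← hNdef] at hsum
  have hX : (Finset.univ.filter fun x : R => (Nat.card (rightMul x) : ℝ) ≤ 2 / ε).card =
      Nat.card {x : R | (Nat.card (rightMul x) : ℝ) ≤ 2 / ε} := by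
    rw [Nat.card_eq_fintype_card, ← Set.toFinset_card]
    congr 1
    ext x
    simp
  rw [hX] at hsum
  unfold ringZeroProb at hzp
  rw [← hNdef, div_eq_iff (by positivity)] at hzp
  rw [hzp] at hsum
  have h4 : (ε / 2 * N) * N ≤
      Nat.card {x : R | (Nat.card (rightMul x) : ℝ) ≤ 2 / ε} * N := by
    nlinarith
  exact le_of_mul_le_mul_right h4 hN

/-- In a finite abelian group, every element of the subgroup generated by a symmetric set `X` is a
sum of `k` elements of `X` with `(k / 3 + 1) |X| ≤ |G|`, where `k / 3` is rounded down. -/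
theorem length_bound {G : Type} [AddCommGroup G] [Finite G] (X : Set G)
    (hneg : ∀ x ∈ X, -x ∈ X) (b : G) (hb : b ∈ AddSubgroup.closure X) :
    ∃ l : List G, (∀ x ∈ l, x ∈ X) ∧ l.sum = b ∧
      (l.length / 3 + 1) * Nat.card X ≤ Nat.card G := by
  classical
  have hex : ∃ n, ∃ l : List G, l.length = n ∧ (∀ x ∈ l, x ∈ X) ∧ l.sum = b := by
    rw [← AddSubgroup.mem_toAddSubmonoid, AddSubgroup.closure_toAddSubmonoid] at hb
    obtain ⟨l, hl, hs⟩ := AddSubmonoid.exists_list_of_mem_closure hb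
    refine ⟨_, l, rfl, fun x hx => ?_, hs⟩
    rcases hl x hx with h | h
    · exact h
    · simpa using hneg _ h
  obtain ⟨l, hlen, hl, hs⟩ := Nat.find_spec hex
  refine ⟨l, hl, hs, ?_⟩
  have hmin : ∀ l' : List G, (∀ x ∈ l', x ∈ X) → l'.sum = b → l.length ≤ l'.length := by
    intro l' h1 h2
    rw [hlen]
    exact Nat.find_min' hex ⟨l', rfl, h1, h2⟩
  have hdisj : ∀ i j : ℕ, i < j → 3 * j ≤ l.length → ∀ x ∈ X, ∀ x' ∈ X,
      (l.take (3 * i)).sum + x ≠ (l.take (3 * j)).sum + x' := by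
    intro i j hij hj x hx x' hx' he
    have h := hmin (l.take (3 * i) ++ ([x, -x'] ++ l.drop (3 * j))) ?_ ?_
    · simp only [List.length_append, List.length_take, List.length_drop, List.length_cons,
        List.length_nil] at h
      omega
    · intro y hy
      simp only [List.mem_append, List.mem_cons, List.not_mem_nil, or_false] at hy
      rcases hy with h | (rfl | rfl) | h
      · exact hl y (List.mem_of_mem_take h)
      · exact hx
      · exact hneg _ hx'
      · exact hl y (List.mem_of_mem_drop h)
    · have h2 := l.sum_take_add_sum_drop (3 * j)
      rw [hs, eq_sub_of_add_eq he.symm] at h2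
      rw [← h2]
      simp only [List.sum_append, List.sum_cons, List.sum_nil]
      abel
  have hinj : Function.Injective
      (fun p : Fin (l.length / 3 + 1) × X => (l.take (3 * p.1.1)).sum + p.2.1) := by
    rintro ⟨i, x⟩ ⟨j, y⟩ h
    dsimp only at h
    have hi := i.2
    have hj := j.2
    rcases lt_trichotomy i.1 j.1 with hij | hij | hij
    · exact absurd h (hdisj _ _ hij (by omega) _ x.2 _ y.2)
    · obtain rfl : i = j := Fin.ext hij
      have : x = y := Subtype.ext (add_left_cancel h)
      rw [this]
    · exact absurd h.symm (hdisj _ _ hij (by omega) _ y.2 _ x.2)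
  have := Nat.card_le_card_of_injective _ hinj
  simpa [Nat.card_prod] using this

/-- Let `R` be a finite ring with `zp(R) = ε > 0`, let
`X = {x ∈ R : |xR| ≤ 2/ε}` and let `B` be the additive subgroup generated by
`X`.  Then every element of `B` is a sum of at most `6/ε` elements of `X`, and
consequently `|bR| ≤ (2/ε) ^ (6/ε)` for every `b ∈ B`. -/
theorem ring_generation_bound (R : Type) [NonUnitalRing R] [Fintype R]
    (ε : ℝ) (hε : 0 < ε) (hzp : ringZeroProb R = ε)
    (X : Set R)
    (hX : X = {x : R | (Nat.card {z : R | ∃ r : R, z = x * r} : ℝ) ≤ 2 / ε})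
    (B : AddSubgroup R) (hB : B = AddSubgroup.closure X) :
    (∀ b ∈ B, ∃ (k : ℕ) (c : Fin k → R),
      (k : ℝ) ≤ 6 / ε ∧ (∀ i, c i ∈ X) ∧ b = ∑ i, c i) ∧
    ∀ b ∈ B,
      (Nat.card {z : R | ∃ r : R, z = b * r} : ℝ) ≤ (2 / ε) ^ ((6 : ℝ) / ε) := by
  subst hB
  have hε1 : ε ≤ 1 := hzp ▸ ringZeroProb_le_one
  have hX' : X = {x : R | (Nat.card (rightMul x) : ℝ) ≤ 2 / ε} := hX
  have hmem : ∀ x ∈ X, (Nat.card (rightMul x) : ℝ) ≤ 2 / ε := by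
    intro x hx
    rw [hX'] at hx
    exact hx
  have hneg : ∀ x ∈ X, -x ∈ X := by
    intro x hx
    rw [hX'] at hx ⊢
    change (Nat.card (rightMul (-x)) : ℝ) ≤ 2 / ε
    rw [rightMul_neg]
    exact hx
  have hcard := card_lower_bound ε hε hzp
  rw [← hX'] at hcard
  have hN : (0 : ℝ) < Nat.card R := by exact_mod_cast Nat.card_pos
  have main : ∀ b ∈ AddSubgroup.closure X, ∃ l : List R, (∀ x ∈ l, x ∈ X) ∧ l.sum = b ∧
      (l.length : ℝ) ≤ 6 / ε := by
    intro b hb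
    obtain ⟨l, hl, hs, hle⟩ := length_bound X hneg b hb
    refine ⟨l, hl, hs, ?_⟩
    have h1 : ((l.length / 3 + 1 : ℕ) : ℝ) * Nat.card X ≤ Nat.card R := by exact_mod_cast hle
    have h2 : (l.length : ℝ) ≤ 3 * ((l.length / 3 + 1 : ℕ) : ℝ) := by
      have : l.length ≤ 3 * (l.length / 3 + 1) := by omega
      exact_mod_cast this
    have h3 : ((l.length / 3 + 1 : ℕ) : ℝ) * (ε / 2 * Nat.card R) ≤ Nat.card R :=
      (mul_le_mul_of_nonneg_left hcard (by positivity)).trans h1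
    have h4 : ((l.length / 3 + 1 : ℕ) : ℝ) * (ε / 2) ≤ 1 := by
      refine le_of_mul_le_mul_right ?_ hN
      linarith
    rw [le_div_iff₀ hε]
    nlinarith
  refine ⟨fun b hb => ?_, fun b hb => ?_⟩
  · obtain ⟨l, hl, hs, hle⟩ := main b hb
    refine ⟨l.length, l.get, hle, fun i => hl _ (l.get_mem i), ?_⟩
    rw [← hs, ← List.sum_ofFn, List.ofFn_get]
  · obtain ⟨l, hl, hs, hle⟩ := main b hb
    have h2ε : 1 ≤ 2 / ε := by
      rw [le_div_iff₀ hε]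
      linarith
    have h := card_rightMul_sum_le (2 / ε) (by positivity) l fun x hx => hmem x (hl x hx)
    rw [hs, ← Real.rpow_natCast] at h
    exact h.trans (Real.rpow_le_rpow_of_exponent_le h2ε hle)
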